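/- Let (θ_j)_{j≥1} be a sequence of real numbers in (1,2), each univoque, converging to θ ∈ (1,2). Then the greedy θ-expansion of 1, d_θ(1), satisfies: either d_θ(1) is strictly self-bracketed (so θ is univoque), or d_θ(1) is finite, say of the form w10^∞, and (w0)^∞ is a periodic self-bracketed sequence. -/

import Mathlib

noncomputable def greedyRem (β : ℝ) : ℕ → ℝ
  | 0 => 1
  | n + 1 => Int.fract (β * greedyRem β n)

noncomputable def greedyDigit (β : ℝ) (n : ℕ) : ℕ := ⌊β * greedyRem β n⌋₊

def shiftSeq (s : ℕ → ℕ) (k : ℕ) : ℕ → ℕ := fun n => s (n + k)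

def complSeq (s : ℕ → ℕ) : ℕ → ℕ := fun n => 1 - s n

def lexLt (a b : ℕ → ℕ) : Prop := ∃ n, (∀ m, m < n → a m = b m) ∧ a n < b n

def lexLe (a b : ℕ → ℕ) : Prop := lexLt a b ∨ a = b

def selfBracketed (s : ℕ → ℕ) : Prop :=
  ∀ k, 1 ≤ k → lexLe (complSeq s) (shiftSeq s k) ∧ lexLe (shiftSeq s k) s

/-- Strictly self-bracketed sequences. -/
def strictlySelfBracketed (s : ℕ → ℕ) : Prop :=
  ∀ k, 1 ≤ k → lexLt (complSeq s) (shiftSeq s k) ∧ lexLt (shiftSeq s k) s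

/-- Periodic self-bracketed: self-bracketed with one of the inequalities an equality. -/
def periodicSelfBracketed (s : ℕ → ℕ) : Prop :=
  selfBracketed s ∧ ∃ k, 1 ≤ k ∧ (shiftSeq s k = s ∨ shiftSeq s k = complSeq s)

/-- β ∈ (1,2) is univoque: 1 has a unique binary β-representation. -/
def Univoque (β : ℝ) : Prop :=
  ∃! s : ℕ → ℕ, (∀ n, s n ≤ 1) ∧ ∑' n : ℕ, (s n : ℝ) / β ^ (n + 1) = 1

/-- Orbit data: a 0-1 sequence `a` with remainders `R` for base `θ`, in the closed region. -/
structure LUOrbit (θ : ℝ) (a : ℕ → ℕ) (R : ℕ → ℝ) : Prop where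
  zero : R 0 = 1
  nonneg : ∀ n, 0 ≤ R n
  le_one : ∀ n, R n ≤ 1
  digit : ∀ n, a n ≤ 1
  step : ∀ n, R (n + 1) = θ * R n - a n
  lower : ∀ n, 1 ≤ n → 1 / (θ - 1) - 1 ≤ R n

theorem lu_pow {θ : ℝ} {a b : ℕ → ℕ} {R S : ℕ → ℝ}
    (hR : ∀ n, R (n + 1) = θ * R n - a n) (hS : ∀ n, S (n + 1) = θ * S n - b n) (p : ℕ)
    (h : ∀ m, m < p → b m = a m) : S p - R p = θ ^ p * (S 0 - R 0) := by
  induction p with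
  | zero => simp
  | succ p ih =>
    have := ih (fun m hm => h m (by omega))
    rw [hR, hS, h p (by omega), pow_succ]
    linear_combination θ * this

theorem lu_lexLe {θ : ℝ} (hθ : 1 < θ) {a b : ℕ → ℕ} {R S : ℕ → ℝ}
    (hR : ∀ n, R (n + 1) = θ * R n - a n) (hS : ∀ n, S (n + 1) = θ * S n - b n)
    (ha : ∀ n, a n ≤ 1) (hb : ∀ n, b n ≤ 1)
    (hR1 : ∀ n, R n ≤ 1) (hS0 : ∀ n, 0 < S n) (h0 : S 0 ≤ R 0) : lexLe b a := by
  classical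
  by_cases hab : b = a
  · exact Or.inr hab
  · have hex : ∃ n, b n ≠ a n := by
      by_contra hcon
      push Not at hcon
      exact hab (funext hcon)
    have hp := Nat.find_spec hex
    have hlt : ∀ m, m < Nat.find hex → b m = a m := fun m hm => by
      have := Nat.find_min hex hm
      push Not at this
      exact this
    generalize Nat.find hex = p at hp hlt
    left
    refine ⟨p, hlt, ?_⟩
    by_contra hcon
    have h1 := ha p
    have h2 := hb p
    have ea : a p = 0 := by omega
    have eb : b p = 1 := by omega
    have h3 := lu_pow hR hS p hlt
    have h4 : θ ^ p * (S 0 - R 0) ≤ 0 :=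
      mul_nonpos_of_nonneg_of_nonpos (by positivity) (by linarith)
    have h5 := hR p
    have h6 := hS p
    rw [ea] at h5
    rw [eb] at h6
    push_cast at h5 h6
    have h7 := hR1 (p + 1)
    have h8 := hS0 (p + 1)
    nlinarith

theorem lu_eq {θ : ℝ} (hθ : 1 < θ) {a : ℕ → ℕ} {R S : ℕ → ℝ}
    (hR : ∀ n, R (n + 1) = θ * R n - a n) (hS : ∀ n, S (n + 1) = θ * S n - a n)
    (hb : ∀ n, |S n - R n| ≤ 1) : S 0 = R 0 := by
  by_contra hne
  have hpos : 0 < |S 0 - R 0| := abs_pos.mpr (sub_ne_zero.mpr hne)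
  obtain ⟨n, hn⟩ := pow_unbounded_of_one_lt (1 / |S 0 - R 0|) hθ
  have h1 := lu_pow hR hS n (fun _ _ => rfl)
  have h2 := hb n
  rw [h1, abs_mul, abs_of_pos (by positivity : 0 < θ ^ n)] at h2
  rw [div_lt_iff₀ hpos] at hn
  linarith

theorem lu_compl {a b : ℕ → ℕ} (ha : ∀ n, a n ≤ 1) (hb : ∀ n, b n ≤ 1)
    (h : lexLe (complSeq b) a) : lexLe (complSeq a) b := by
  rcases h with ⟨n, h1, h2⟩ | h
  · refine Or.inl ⟨n, fun m hm => ?_, ?_⟩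
    · have := h1 m hm
      have := ha m
      have := hb m
      simp only [complSeq] at *
      omega
    · have := ha n
      have := hb n
      simp only [complSeq] at *
      omega
  · right
    funext n
    have h3 := congrFun h n
    have := ha n
    have := hb n
    simp only [complSeq] at *
    omega

theorem lu_c {θ : ℝ} (h1 : 1 < θ) (h2 : θ < 2) : 0 < 1 / (θ - 1) - 1 := by
  have : 1 < 1 / (θ - 1) := by
    rw [lt_div_iff₀ (by linarith)]
    linarith
  linarith

theorem LUOrbit.bracketed {θ : ℝ} (h1 : 1 < θ) (h2 : θ < 2) {a : ℕ → ℕ} {R : ℕ → ℝ}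
    (h : LUOrbit θ a R) : selfBracketed a := by
  have hc := lu_c h1 h2
  intro k hk
  constructor
  · apply lu_compl h.digit (fun n => h.digit (n + k))
    refine lu_lexLe (S := fun n => 1 / (θ - 1) - R (n + k)) h1 h.step ?_ h.digit ?_ h.le_one ?_ ?_
    · intro n
      have e : n + 1 + k = n + k + 1 := by ring
      have hd := h.digit (n + k)
      simp only [complSeq, shiftSeq]
      rw [e, h.step, Nat.cast_sub hd]
      have : θ - 1 ≠ 0 := by linarith
      field_simp
      push_cast
      ring
    · intro n
      simp [complSeq]
    · intro n
      have := h.le_one (n + k)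
      try simp only
      linarith
    · have := h.lower (0 + k) (by omega)
      rw [h.zero]
      try simp only
      linarith
  · refine lu_lexLe (S := fun n => R (n + k)) h1 h.step ?_ h.digit ?_ h.le_one ?_ ?_
    · intro n
      have e : n + 1 + k = n + k + 1 := by ring
      simp only [shiftSeq]
      rw [e, h.step]
    · intro n
      exact h.digit _
    · intro n
      have := h.lower (n + k) (by omega)
      try simp only
      linarith
    · rw [h.zero]
      exact h.le_one _

theorem LUOrbit.shift_ne {θ : ℝ} (h1 : 1 < θ) {a : ℕ → ℕ} {R : ℕ → ℝ}
    (h : LUOrbit θ a R) (hlt : ∀ n, 1 ≤ n → R n < 1) (k : ℕ) (hk : 1 ≤ k) : shiftSeq a k ≠ a := by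
  intro he
  have : (fun n => R (n + k)) 0 = R 0 := by
    refine lu_eq (S := fun n => R (n + k)) h1 h.step ?_ ?_
    · intro n
      have e : n + 1 + k = n + k + 1 := by ring
      have := congrFun he n
      simp only [shiftSeq] at this
      try simp only
      rw [e, h.step, this]
    · intro n
      have := h.nonneg n
      have := h.le_one n
      have := h.nonneg (n + k)
      have := h.le_one (n + k)
      rw [abs_le]
      constructor <;> linarith
  have h3 := hlt (0 + k) (by omega)
  rw [h.zero] at this
  try simp only at this
  linarith

theorem LUOrbit.strict {θ : ℝ} (h1 : 1 < θ) (h2 : θ < 2) {a : ℕ → ℕ} {R : ℕ → ℝ}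
    (h : LUOrbit θ a R) (hlt : ∀ n, 1 ≤ n → R n < 1) : strictlySelfBracketed a := by
  intro k hk
  obtain ⟨hl, hr⟩ := h.bracketed h1 h2 k hk
  constructor
  · rcases hl with hl | hl
    · exact hl
    · exfalso
      apply h.shift_ne h1 hlt (k + k) (by omega)
      funext n
      have e1 := congrFun hl n
      have e2 := congrFun hl (n + k)
      have := h.digit n
      simp only [complSeq, shiftSeq] at *
      rw [← add_assoc]
      omega
  · rcases hr with hr | hr
    · exact hr
    · exact absurd hr (h.shift_ne h1 hlt k hk)

theorem lu_greedy_bd {θ : ℝ} (n : ℕ) : 0 ≤ greedyRem θ n ∧ greedyRem θ n ≤ 1 := by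
  cases n with
  | zero => simp [greedyRem]
  | succ n => exact ⟨Int.fract_nonneg _, (Int.fract_lt_one _).le⟩

theorem lu_greedy_step {θ : ℝ} (h1 : 1 < θ) (n : ℕ) :
    greedyRem θ (n + 1) = θ * greedyRem θ n - greedyDigit θ n := by
  have h := (lu_greedy_bd (θ := θ) n).1
  have h0 : 0 ≤ θ * greedyRem θ n := by positivity
  have : greedyRem θ (n + 1) = Int.fract (θ * greedyRem θ n) := rfl
  rw [this, greedyDigit, Int.fract, natCast_floor_eq_intCast_floor h0]

theorem lu_greedy_digit {θ : ℝ} (h1 : 1 < θ) (h2 : θ < 2) (n : ℕ) : greedyDigit θ n ≤ 1 := by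
  have h := lu_greedy_bd (θ := θ) n
  have : greedyDigit θ n < 2 := by
    rw [greedyDigit, Nat.floor_lt (by nlinarith)]
    push_cast
    nlinarith
  omega

theorem lu_hasSum {θ : ℝ} (h1 : 1 < θ) {a : ℕ → ℕ} {R : ℕ → ℝ} {C : ℝ} (h0 : R 0 = 1)
    (hR : ∀ n, R (n + 1) = θ * R n - a n) (hb : ∀ n, |R n| ≤ C) :
    ∑' n : ℕ, (a n : ℝ) / θ ^ (n + 1) = 1 := by
  have hpos : 0 < θ := by linarith
  apply HasSum.tsum_eq
  rw [hasSum_iff_tendsto_nat_of_nonneg (fun n => by positivity)]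
  have hs : ∀ n, ∑ i ∈ Finset.range n, (a i : ℝ) / θ ^ (i + 1) = 1 - R n * (1 / θ) ^ n := by
    intro n
    induction n with
    | zero => simp [h0]
    | succ n ih =>
      rw [Finset.sum_range_succ, ih, hR, one_div, inv_pow, inv_pow]
      field_simp
      ring
  simp_rw [hs]
  have ht : Filter.Tendsto (fun n => R n * (1 / θ) ^ n) Filter.atTop (nhds 0) := by
    have hp : Filter.Tendsto (fun n : ℕ => C * (1 / θ) ^ n) Filter.atTop (nhds 0) := by
      have := (tendsto_pow_atTop_nhds_zero_of_lt_one (r := 1 / θ) (by positivity)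
        (by rw [div_lt_one hpos]; exact h1)).const_mul C
      simpa using this
    refine squeeze_zero_norm (fun n => ?_) hp
    rw [Real.norm_eq_abs, abs_mul, abs_of_pos (by positivity : 0 < (1 / θ) ^ n)]
    exact mul_le_mul_of_nonneg_right (hb n) (by positivity)
  simpa using ht.const_sub 1

/-- Greedy orbit of 1 with digit forced to be zero at time `N`. -/
noncomputable def luAlt (θ : ℝ) (N : ℕ) : ℕ → ℝ
  | 0 => 1
  | n + 1 => θ * luAlt θ N n -
      ((if n = N then 0 else if 1 ≤ θ * luAlt θ N n then 1 else 0 : ℕ) : ℝ)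

noncomputable def luAltDigit (θ : ℝ) (N : ℕ) (n : ℕ) : ℕ :=
  if n = N then 0 else if 1 ≤ θ * luAlt θ N n then 1 else 0

theorem luAlt_step (θ : ℝ) (N n : ℕ) :
    luAlt θ N (n + 1) = θ * luAlt θ N n - luAltDigit θ N n := rfl

theorem lu_greedy_digit_eq {θ : ℝ} (h1 : 1 < θ) (h2 : θ < 2) (n : ℕ) :
    greedyDigit θ n = if 1 ≤ θ * greedyRem θ n then 1 else 0 := by
  have hd := lu_greedy_digit h1 h2 n
  split_ifs with h
  · have : 1 ≤ greedyDigit θ n := by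
      rw [greedyDigit, Nat.le_floor_iff (by linarith)]
      simpa using h
    omega
  · rw [greedyDigit, Nat.floor_eq_zero]
    linarith

theorem luAlt_eq {θ : ℝ} (h1 : 1 < θ) (h2 : θ < 2) (N n : ℕ) (hn : n ≤ N) :
    luAlt θ N n = greedyRem θ n := by
  induction n with
  | zero => rfl
  | succ n ih =>
    have := ih (by omega)
    rw [luAlt_step, lu_greedy_step h1, lu_greedy_digit_eq h1 h2, luAltDigit, this,
      if_neg (by omega)]

theorem luAlt_bd {θ : ℝ} (h1 : 1 < θ) (h2 : θ < 2) (N : ℕ)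
    (hN : θ * greedyRem θ N ≤ 1 / (θ - 1)) (n : ℕ) :
    0 ≤ luAlt θ N n ∧ luAlt θ N n ≤ 1 / (θ - 1) := by
  have hc := lu_c h1 h2
  have hmul : (1 / (θ - 1)) * (θ - 1) = 1 := by
    have : θ - 1 ≠ 0 := by linarith
    field_simp
  induction n with
  | zero =>
    simp only [luAlt]
    constructor <;> linarith
  | succ n ih =>
    rw [luAlt_step, luAltDigit]
    split_ifs with ha hb
    · subst ha
      rw [luAlt_eq h1 h2 n n le_rfl]
      have := (lu_greedy_bd (θ := θ) n).1
      push_cast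
      refine ⟨?_, by linarith⟩
      rw [sub_zero]
      positivity
    · push_cast
      constructor
      · linarith
      · have := mul_le_mul_of_nonneg_left ih.2 (by linarith : (0 : ℝ) ≤ θ)
        linarith
    · have := ih.1
      push_cast
      push Not at hb
      refine ⟨?_, by linarith⟩
      rw [sub_zero]
      positivity

theorem lu_univoque_lower {θ : ℝ} (h1 : 1 < θ) (h2 : θ < 2) (hu : Univoque θ) (n : ℕ)
    (hn : 1 ≤ n) : 1 / (θ - 1) - 1 ≤ greedyRem θ n := by
  have hc := lu_c h1 h2
  have key : ∀ N, greedyDigit θ N = 1 → 1 / (θ - 1) < θ * greedyRem θ N := by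
    intro N hd
    by_contra hcon
    push Not at hcon
    have e1 : ∑' n : ℕ, (greedyDigit θ n : ℝ) / θ ^ (n + 1) = 1 := by
      refine lu_hasSum (C := 1) h1 (R := greedyRem θ) rfl (lu_greedy_step h1) (fun n => ?_)
      have := lu_greedy_bd (θ := θ) n
      rw [abs_of_nonneg this.1]
      exact this.2
    have e2 : ∑' n : ℕ, (luAltDigit θ N n : ℝ) / θ ^ (n + 1) = 1 := by
      refine lu_hasSum (C := 1 / (θ - 1)) h1 (R := luAlt θ N) rfl (luAlt_step θ N) (fun n => ?_)
      have := luAlt_bd h1 h2 N hcon n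
      rw [abs_of_nonneg this.1]
      exact this.2
    have := hu.unique ⟨lu_greedy_digit h1 h2, e1⟩
      ⟨fun n => by unfold luAltDigit; split_ifs <;> simp, e2⟩
    have h3 := congrFun this N
    rw [hd] at h3
    simp [luAltDigit] at h3
  induction n, hn using Nat.le_induction with
  | base =>
    have hd : greedyDigit θ 0 = 1 := by
      rw [lu_greedy_digit_eq h1 h2, if_pos]
      simp only [greedyRem]
      linarith
    have := key 0 hd
    rw [lu_greedy_step h1, hd]
    push_cast
    linarith
  | succ n hn ih =>
    have hd := lu_greedy_digit h1 h2 n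
    rw [lu_greedy_step h1]
    rcases Nat.le_one_iff_eq_zero_or_eq_one.mp hd with hd | hd
    · rw [hd]
      push_cast
      have := (lu_greedy_bd (θ := θ) n).1
      nlinarith
    · have := key n hd
      rw [hd]
      push_cast
      linarith

theorem lu_limit (θs : ℕ → ℝ) (hθs : ∀ j, 1 < θs j ∧ θs j < 2 ∧ Univoque (θs j))
    (θ : ℝ) (h1 : 1 < θ)
    (hlim : Filter.Tendsto θs Filter.atTop (nhds θ)) : ∃ a R, LUOrbit θ a R := by
  have hK : IsCompact (Set.pi Set.univ (fun _ : ℕ => Set.Icc (0 : ℝ) 1)) :=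
    isCompact_univ_pi (fun _ => isCompact_Icc)
  obtain ⟨R, hR, φ, hφ, hconv⟩ := hK.tendsto_subseq (x := fun j => greedyRem (θs j))
    (fun j n _ => ⟨(lu_greedy_bd n).1, (lu_greedy_bd n).2⟩)
  rw [tendsto_pi_nhds] at hconv
  have hθ := hlim.comp hφ.tendsto_atTop
  have hdig : ∀ n, ∃ d : ℕ, d ≤ 1 ∧ R (n + 1) = θ * R n - d := by
    intro n
    have ht := (hθ.mul (hconv n)).sub (hconv (n + 1))
    have hcl : IsClosed ({0, 1} : Set ℝ) := (Set.toFinite _).isClosed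
    have hmem := hcl.mem_of_tendsto ht (Filter.Eventually.of_forall (fun j => by
      have hs := lu_greedy_step (hθs (φ j)).1 n
      have hd := lu_greedy_digit (hθs (φ j)).1 (hθs (φ j)).2.1 n
      simp only [Function.comp]
      rw [hs]
      rcases Nat.le_one_iff_eq_zero_or_eq_one.mp hd with hd | hd
      · rw [hd]; left; push_cast; ring
      · rw [hd]; right; simp))
    rcases hmem with h | h
    · exact ⟨0, by omega, by push_cast; linarith⟩
    · refine ⟨1, by omega, ?_⟩
      rw [Set.mem_singleton_iff] at h
      push_cast; linarith
  choose a ha hs using hdig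
  refine ⟨a, R, ?_, fun n => (hR n trivial).1, fun n => (hR n trivial).2, ha, hs, ?_⟩
  · refine tendsto_nhds_unique (hconv 0) ?_
    simp [Function.comp_def, greedyRem]
  · intro n hn
    have hl : Filter.Tendsto (fun j => 1 / ((θs ∘ φ) j - 1) - 1) Filter.atTop
        (nhds (1 / (θ - 1) - 1)) :=
      (tendsto_const_nhds.div (hθ.sub_const 1) (by linarith)).sub_const 1
    refine le_of_tendsto_of_tendsto' hl (hconv n) (fun j => ?_)
    exact lu_univoque_lower (hθs (φ j)).1 (hθs (φ j)).2.1 (hθs (φ j)).2.2 n hn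

theorem LUOrbit.greedy {θ : ℝ} (h1 : 1 < θ) (h2 : θ < 2) {a : ℕ → ℕ} {R : ℕ → ℝ}
    (h : LUOrbit θ a R) (m : ℕ) (hlt : ∀ n, 1 ≤ n → n ≤ m → R n < 1) :
    greedyRem θ m = R m ∧ ∀ n, n < m → greedyDigit θ n = a n := by
  induction m with
  | zero => exact ⟨by rw [h.zero]; rfl, fun n hn => by omega⟩
  | succ m ih =>
    obtain ⟨e, ed⟩ := ih (fun n hn hm => hlt n hn (by omega))
    have hm : greedyDigit θ m = a m := by
      have s := h.step m
      have l := hlt (m + 1) (by omega) le_rfl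
      have p := h.nonneg (m + 1)
      rw [greedyDigit, e, Nat.floor_eq_iff (by have := h.nonneg m; positivity)]
      constructor <;> linarith
    refine ⟨by rw [lu_greedy_step h1, hm, e, h.step], fun n hn => ?_⟩
    rcases Nat.lt_succ_iff_lt_or_eq.mp hn with hn | hn
    · exact ed n hn
    · rw [hn, hm]

/-- A limit θ ∈ (1,2) of univoque numbers is univoque (its greedy expansion of 1 is
strictly self-bracketed), or its greedy expansion is finite, d_θ(1) = w10^∞, with
(w0)^∞ periodic self-bracketed. Indexing from 0: digits s 0, s 1, … are s_1, s_2, …. -/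
theorem limit_of_univoque (θs : ℕ → ℝ) (hθs : ∀ j, 1 < θs j ∧ θs j < 2 ∧ Univoque (θs j))
    (θ : ℝ) (h1 : 1 < θ) (h2 : θ < 2)
    (hlim : Filter.Tendsto θs Filter.atTop (nhds θ)) :
    strictlySelfBracketed (greedyDigit θ) ∨
      ∃ m, greedyDigit θ m = 1 ∧ (∀ n, m < n → greedyDigit θ n = 0) ∧
        periodicSelfBracketed (fun n =>
          if n % (m + 1) = m then 0 else greedyDigit θ (n % (m + 1))) := by
  classical
  obtain ⟨a, R, h⟩ := lu_limit θs hθs θ h1 hlim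
  by_cases hlt : ∀ n, 1 ≤ n → R n < 1
  · left
    have : greedyDigit θ = a := by
      funext n
      exact (h.greedy h1 h2 (n + 1) (fun k hk _ => hlt k hk)).2 n (by omega)
    rw [this]
    exact h.strict h1 h2 hlt
  · right
    have hex : ∃ m, R (m + 1) = 1 := by
      push Not at hlt
      obtain ⟨n, hn, hn'⟩ := hlt
      refine ⟨n - 1, ?_⟩
      rw [Nat.sub_add_cancel hn]
      exact le_antisymm (h.le_one n) hn'
    have hm := Nat.find_spec hex
    have hmin : ∀ k, k < Nat.find hex → R (k + 1) ≠ 1 := fun k hk => Nat.find_min hex hk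
    generalize Nat.find hex = m at hm hmin
    have hltm : ∀ n, 1 ≤ n → n ≤ m → R n < 1 := by
      intro n hn hnm
      refine lt_of_le_of_ne (h.le_one n) ?_
      have := hmin (n - 1) (by omega)
      rwa [Nat.sub_add_cancel hn] at this
    obtain ⟨eR, ed⟩ := h.greedy h1 h2 m hltm
    have ham : a m = 0 := by
      rcases Nat.le_one_iff_eq_zero_or_eq_one.mp (h.digit m) with hd | hd
      · exact hd
      · exfalso
        have s := h.step m
        rw [hm, hd] at s
        push_cast at s
        have := h.le_one m
        nlinarith
    have hθm : θ * R m = 1 := by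
      have s := h.step m
      rw [hm, ham] at s
      push_cast at s
      linarith
    have hdm : greedyDigit θ m = 1 := by
      rw [greedyDigit, eR, hθm]
      simp
    have hzero : ∀ n, m < n → greedyRem θ n = 0 := by
      intro n hn
      induction n, hn using Nat.le_induction with
      | base =>
        rw [lu_greedy_step h1, hdm, eR, hθm]
        simp
      | succ n hn ih => simp [greedyRem, ih]
    refine ⟨m, hdm, fun n hn => by simp [greedyDigit, hzero n hn], ?_, m + 1, by omega, Or.inl ?_⟩
    · have hb : (fun n => if n % (m + 1) = m then 0 else greedyDigit θ (n % (m + 1)))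
          = fun n => a (n % (m + 1)) := by
        funext n
        have hl : n % (m + 1) < m + 1 := Nat.mod_lt n (Nat.succ_pos m)
        try simp only
        split_ifs with hc
        · rw [hc, ham]
        · exact ed _ (by omega)
      rw [hb]
      refine LUOrbit.bracketed h1 h2 (R := fun n => R (n % (m + 1))) ⟨?_, ?_, ?_, ?_, ?_, ?_⟩
      · simpa using h.zero
      · exact fun n => h.nonneg _
      · exact fun n => h.le_one _
      · exact fun n => h.digit _
      · intro n
        have hl : n % (m + 1) < m + 1 := Nat.mod_lt n (Nat.succ_pos m)
        try simp only
        rw [← h.step]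
        by_cases hc : n % (m + 1) = m
        · have : (n + 1) % (m + 1) = 0 := by
            rw [Nat.add_mod, hc]
            rcases Nat.eq_zero_or_pos m with h0 | h0
            · subst h0; simp [Nat.mod_one]
            · rw [Nat.mod_eq_of_lt (by omega : 1 < m + 1), Nat.mod_self]
          rw [this, hc, hm, h.zero]
        · have : (n + 1) % (m + 1) = n % (m + 1) + 1 := by
            rw [Nat.add_mod, Nat.mod_eq_of_lt (by omega : 1 < m + 1), Nat.mod_eq_of_lt (by omega)]
          rw [this]
      · intro n hn
        try simp only
        by_cases hc : n % (m + 1) = 0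
        · have := h.lower (m + 1) (by omega)
          rw [hc, h.zero]
          rwa [hm] at this
        · exact h.lower _ (by omega)
    · funext n
      simp [shiftSeq]
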